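/- The theory of the free pseudoplane is complete. Precisely, in the first-order language with a single binary relation symbol I, let T be the theory consisting of: (1) the sentences asserting that I is symmetric and irreflexive; (2) for each natural number n, the sentence asserting that every element has at least n distinct I-neighbors; and (3) for each n ≥ 3, the sentence asserting that there do not exist a₀, a₁, …, aₙ with I(aᵢ, aᵢ₊₁) for all i < n, with a₀, …, a_{n−1} pairwise distinct and aₙ = a₀. Then T is a complete theory: T is satisfiable, and for every sentence φ of the language, either φ ∈ T's consequences or ¬φ ∈ T's consequences. -/

import Mathlib

open FirstOrder FirstOrder.Language

/-- Existentially quantify the last `k` bound variables of a bounded formula. -/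
def FirstOrder.Language.BoundedFormula.exsN {L : Language} {α : Type*} {m : ℕ} :
    ∀ {k : ℕ}, L.BoundedFormula α (m + k) → L.BoundedFormula α m
  | 0, φ => φ
  | k + 1, φ => BoundedFormula.exsN (k := k) φ.ex

/-- The conjunction of a list of bounded formulas. -/
def FirstOrder.Language.BoundedFormula.listAnd {L : Language} {α : Type*} {m : ℕ}
    (l : List (L.BoundedFormula α m)) : L.BoundedFormula α m :=
  l.foldr (· ⊓ ·) ⊤

namespace FreePseudoplane

/-- The variable `x` (the element whose neighbors we count). -/
def xVar (n : ℕ) : Language.graph.Term (Empty ⊕ Fin (1 + n)) :=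
  Term.var (Sum.inr ⟨0, by omega⟩)

/-- The variable `yᵢ` (the `i`-th neighbor). -/
def yVar {n : ℕ} (i : Fin n) : Language.graph.Term (Empty ⊕ Fin (1 + n)) :=
  Term.var (Sum.inr ⟨1 + (i : ℕ), by omega⟩)

/-- The sentence `∀ x, ∃ y₀ … y_{n-1}` pairwise distinct with `I(x, yᵢ)` for each `i`:
every element has at least `n` distinct `I`-neighbors. -/
def atLeastNeighbors (n : ℕ) : Language.graph.Sentence :=
  (BoundedFormula.exsN (m := 1) (k := n)
    (BoundedFormula.listAnd
      (((List.finRange n).map fun i => adj.boundedFormula₂ (xVar n) (yVar i)) ++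
        ((List.finRange n).flatMap fun i => (List.finRange n).map fun j =>
          if i = j then ⊤ else ∼(Term.bdEqual (yVar i) (yVar j)))))).all

/-- The sentence asserting there is no loop of length `n`: there do not exist
`a₀, a₁, …, aₙ` with `I(aᵢ, aᵢ₊₁)` for all `i < n`, with `a₀, …, a_{n-1}` pairwise
distinct and `aₙ = a₀`. -/
def noLoop (n : ℕ) : Language.graph.Sentence :=
  ∼(BoundedFormula.exs
    (BoundedFormula.listAnd
      ((((List.finRange n).map fun i : Fin n =>
          adj.boundedFormula₂ (Term.var (Sum.inr i.castSucc)) (Term.var (Sum.inr i.succ))) ++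
        ((List.finRange n).flatMap fun i => (List.finRange n).map fun j =>
          if i = j then (⊤ : Language.graph.BoundedFormula Empty (n + 1))
          else ∼(Term.bdEqual (Term.var (Sum.inr i.castSucc)) (Term.var (Sum.inr j.castSucc))))) ++
        [Term.bdEqual (Term.var (Sum.inr (Fin.last n)))
          (Term.var (Sum.inr (0 : Fin (n + 1))))])))

/-- The theory of the free pseudoplane (the infinite forest): `I` is symmetric and
irreflexive, every element has at least `n` distinct `I`-neighbors for every `n`, and
there are no loops of length `n` for any `n ≥ 3`. -/
def theory : Language.graph.Theory :=
  Theory.simpleGraph ∪ {φ | ∃ n : ℕ, φ = atLeastNeighbors n} ∪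
    {φ | ∃ n : ℕ, 3 ≤ n ∧ φ = noLoop n}

end FreePseudoplane

namespace PPProof

section Comb

open SimpleGraph
variable {V W : Type} {G : SimpleGraph V} {H : SimpleGraph W}

lemma acyc_uniq (hG : G.IsAcyclic) {c x y : V} (hx : G.Adj c x) (hy : G.Adj c y)
    (p : G.Walk x y) (hp : c ∉ p.support) : x = y := by
  classical
  by_contra hne
  have h2 : (Walk.cons hx.symm (Walk.cons hy Walk.nil)).IsPath := by
    simp [Walk.cons_isPath_iff, hy.ne, hne, hx.ne.symm]
  have := (hG.subsingleton_path _ _).elim ⟨p.bypass, p.bypass_isPath⟩ ⟨_, h2⟩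
  have h3 : p.bypass = (Walk.cons hx.symm (Walk.cons hy Walk.nil)) := congrArg Subtype.val this
  apply hp
  apply p.support_bypass_subset_support
  rw [h3]; simp

lemma exists_path_len (hI : ∀ x, (G.neighborSet x).Infinite) (x : V) (R : ℕ) :
    ∃ d, ∃ p : G.Walk x d, p.IsPath ∧ p.length = R := by
  classical
  induction R with
  | zero => exact ⟨x, Walk.nil, by simp, rfl⟩
  | succ R ih =>
    obtain ⟨d, p, hp, hl⟩ := ih
    obtain ⟨e, he, hn⟩ := (hI d).exists_notMem_finset p.support.toFinset
    replace he : G.Adj d e := he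
    refine ⟨e, p.concat he, ?_, by simp [hl]⟩
    rw [Walk.concat_isPath_iff]
    exact ⟨hp, by simpa using hn⟩

lemma pp_dist_eq (hG : G.IsAcyclic) (hI : ∀ x, (G.neighborSet x).Infinite) (x : V) (R : ℕ) :
    ∃ d, G.Reachable x d ∧ G.dist x d = R := by
  obtain ⟨d, p, hp, hl⟩ := exists_path_len hI x R
  obtain ⟨q, hq, hq2⟩ := p.reachable.exists_path_of_dist
  have := (hG.subsingleton_path _ _).elim ⟨p, hp⟩ ⟨q, hq⟩
  have h3 : p = q := congrArg Subtype.val this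
  exact ⟨d, p.reachable, by rw [← hq2, ← h3, hl]⟩

lemma pp_far [Nonempty V] (hG : G.IsAcyclic) (hI : ∀ x, (G.neighborSet x).Infinite)
    (B : Set V) (hB : B.Finite) (r : ℕ) : ∃ d, ∀ b ∈ B, ∀ p : G.Walk b d, r < p.length := by
  rcases B.eq_empty_or_nonempty with rfl | ⟨b, hb⟩
  · exact ⟨Classical.arbitrary V, by simp⟩
  obtain ⟨M, hM⟩ := (hB.image (G.dist b)).bddAbove
  obtain ⟨d, hd, hdd⟩ := pp_dist_eq hG hI b (M + r + 1)
  refine ⟨d, fun b' hb' p => ?_⟩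
  have h1 : G.dist b b' ≤ M := hM ⟨b', hb', rfl⟩
  obtain ⟨q, hq⟩ := (hd.trans p.reachable.symm).exists_walk_length_eq_dist
  have := dist_le (q.append p)
  rw [Walk.length_append] at this
  omega

def Conn (G : SimpleGraph V) (H : SimpleGraph W) (S : Set (V × W)) : V × W → V × W → Prop :=
  Relation.ReflTransGen (fun p q => p ∈ S ∧ q ∈ S ∧ G.Adj p.1 q.1 ∧ H.Adj p.2 q.2)

structure PInv (G : SimpleGraph V) (H : SimpleGraph W) (r : ℕ) (S : Set (V × W)) : Prop where
  fin : S.Finite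
  eq : ∀ p ∈ S, ∀ q ∈ S, p.1 = q.1 ↔ p.2 = q.2
  adj : ∀ p ∈ S, ∀ q ∈ S, G.Adj p.1 q.1 ↔ H.Adj p.2 q.2
  left : ∀ p ∈ S, ∀ q ∈ S, ∀ w : G.Walk p.1 q.1, w.length ≤ r → Conn G H S p q
  right : ∀ p ∈ S, ∀ q ∈ S, ∀ w : H.Walk p.2 q.2, w.length ≤ r → Conn G H S p q

lemma PInv.mono {r r' : ℕ} {S : Set (V × W)} (h : PInv G H r S) (hr : r' ≤ r) : PInv G H r' S :=
  ⟨h.fin, h.eq, h.adj, fun p hp q hq w hw => h.left p hp q hq w (hw.trans hr),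
    fun p hp q hq w hw => h.right p hp q hq w (hw.trans hr)⟩

lemma Conn.mono {S T : Set (V × W)} (h : S ⊆ T) {p q} (hc : Conn G H S p q) : Conn G H T p q :=
  Relation.ReflTransGen.mono (fun _ _ h1 => ⟨h h1.1, h h1.2.1, h1.2.2⟩) _ _ hc

lemma Conn.symm {S : Set (V × W)} {p q} (hc : Conn G H S p q) : Conn G H S q p := by
  induction hc with
  | refl => exact Relation.ReflTransGen.refl
  | tail _ h ih => exact Relation.ReflTransGen.head ⟨h.2.1, h.1, h.2.2.1.symm, h.2.2.2.symm⟩ ih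

lemma Conn.swap {S : Set (V × W)} {p q} (hc : Conn G H S p q) :
    Conn H G (Set.preimage Prod.swap S) p.swap q.swap := by
  induction hc with
  | refl => exact Relation.ReflTransGen.refl
  | tail _ h ih =>
    exact Relation.ReflTransGen.tail ih ⟨by simpa using h.1, by simpa using h.2.1, h.2.2.2, h.2.2.1⟩

lemma PInv.swap {r : ℕ} {S : Set (V × W)} (h : PInv G H r S) : PInv H G r (Set.preimage Prod.swap S) := by
  refine ⟨h.fin.preimage (Prod.swap_injective.injOn), ?_, ?_, ?_, ?_⟩
  · exact fun p hp q hq => (h.eq _ hp _ hq).symm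
  · exact fun p hp q hq => (h.adj _ hp _ hq).symm
  · exact fun p hp q hq w hw => by simpa using (h.right _ hp _ hq w hw).swap
  · exact fun p hp q hq w hw => by simpa using (h.left _ hp _ hq w hw).swap

lemma Conn.walk {S : Set (V × W)} {p q} (hp : p ∈ S) (hc : Conn G H S p q) {c : V}
    (hcS : ∀ s ∈ S, s.1 ≠ c) : ∃ w : G.Walk p.1 q.1, c ∉ w.support := by
  induction hc with
  | refl => exact ⟨Walk.nil, by simpa using (hcS p hp).symm⟩
  | tail _ h ih =>
    obtain ⟨w, hw⟩ := ih
    refine ⟨w.concat h.2.2.1, ?_⟩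
    simp [Walk.support_concat, hw, (hcS _ h.2.1).symm]

/-- a vertex outside `S` adjacent to `p` is adjacent to nothing else in `S` -/
lemma PInv.uniq (hG : G.IsAcyclic) {r : ℕ} {S : Set (V × W)} (h : PInv G H (r + 1) S) (hr : 1 ≤ r)
    {p q} (hp : p ∈ S) (hq : q ∈ S) {c : V} (hc : G.Adj p.1 c) (hcS : ∀ s ∈ S, s.1 ≠ c)
    (hcq : G.Adj c q.1) : p = q := by
  have h1 := h.left p hp q hq (Walk.cons hc (Walk.cons hcq Walk.nil)) (by simp; omega)
  obtain ⟨w, hw⟩ := h1.walk hp hcS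
  have h2 := acyc_uniq hG hc.symm hcq w hw
  exact Prod.ext h2 ((h.eq p hp q hq).1 h2)

lemma PInv.step (hG : G.IsAcyclic) (hH : H.IsAcyclic) (hI : ∀ x, (H.neighborSet x).Infinite)
    {r : ℕ} {S : Set (V × W)} (h : PInv G H (r + 1) S) (hr : 1 ≤ r)
    {p} (hp : p ∈ S) {c : V} (hc : G.Adj p.1 c) :
    ∃ d, ∃ S', S ⊆ S' ∧ (c, d) ∈ S' ∧ PInv G H r S' := by
  classical
  by_cases hcS : ∃ q ∈ S, q.1 = c
  · obtain ⟨q, hq, rfl⟩ := hcS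
    exact ⟨q.2, S, subset_rfl, hq, h.mono (by omega)⟩
  push Not at hcS
  obtain ⟨d, hd, hdS⟩ := (hI p.2).exists_notMem_finite (h.fin.image Prod.snd)
  replace hdS : ∀ s ∈ S, s.2 ≠ d := fun s hs e => hdS ⟨s, hs, e⟩
  replace hd : H.Adj p.2 d := hd
  have key : ∀ q ∈ S, G.Adj c q.1 ↔ H.Adj d q.2 := by
    intro q hq
    constructor
    · intro hcq
      have := h.uniq hG hr hp hq hc hcS hcq
      subst this; exact hd.symm
    · intro hdq
      have := h.swap.uniq hH hr (p := p.swap) (q := q.swap) (by simpa) (by simpa) hd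
        (fun s hs => hdS _ hs) hdq
      have := Prod.swap_injective this
      subst this; exact hc.symm
  have hsub : S ⊆ insert (c, d) S := Set.subset_insert _ _
  have hpc : Conn G H (insert (c, d) S) (c, d) p :=
    Relation.ReflTransGen.single ⟨by simp, hsub hp, hc.symm, hd.symm⟩
  have hl : ∀ q ∈ S, ∀ w : G.Walk c q.1, w.length ≤ r → Conn G H (insert (c, d) S) (c, d) q :=
    fun q hq w hw => hpc.trans
      ((h.left p hp q hq (Walk.cons hc w) (by simpa using hw)).mono hsub)
  have hr' : ∀ q ∈ S, ∀ w : H.Walk d q.2, w.length ≤ r → Conn G H (insert (c, d) S) (c, d) q :=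
    fun q hq w hw => hpc.trans
      ((h.right p hp q hq (Walk.cons hd w) (by simpa using hw)).mono hsub)
  refine ⟨d, insert (c, d) S, hsub, by simp, h.fin.insert _, ?_, ?_, ?_, ?_⟩
  · rintro a (rfl | ha) b (rfl | hb)
    · simp
    · simp [(hcS _ hb).symm, (hdS _ hb).symm]
    · simp [(hcS _ ha), (hdS _ ha)]
    · exact h.eq a ha b hb
  · rintro a (rfl | ha) b (rfl | hb)
    · simp
    · exact key b hb
    · rw [G.adj_comm, H.adj_comm]; exact key a ha
    · exact h.adj a ha b hb
  · rintro a (rfl | ha) b (rfl | hb) w hw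
    · exact Relation.ReflTransGen.refl
    · exact hl b hb w hw
    · exact (hl a ha w.reverse (by simpa using hw)).symm
    · exact (h.left a ha b hb w (by omega)).mono hsub
  · rintro a (rfl | ha) b (rfl | hb) w hw
    · exact Relation.ReflTransGen.refl
    · exact hr' b hb w hw
    · exact (hr' a ha w.reverse (by simpa using hw)).symm
    · exact (h.right a ha b hb w (by omega)).mono hsub

lemma PInv.path (hG : G.IsAcyclic) (hH : H.IsAcyclic) (hI : ∀ x, (H.neighborSet x).Infinite)
    {r : ℕ} (hr : 1 ≤ r) {u c : V} (w : G.Walk u c) : ∀ {S : Set (V × W)} {v : W},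
    PInv G H (r + w.length) S → (u, v) ∈ S → ∃ d, ∃ S', S ⊆ S' ∧ (c, d) ∈ S' ∧ PInv G H r S' := by
  induction w with
  | nil => intro S v h hv; exact ⟨v, S, subset_rfl, hv, h⟩
  | cons ha w ih =>
    intro S v h hv
    obtain ⟨d, S', h1, h2, h3⟩ := PInv.step hG hH hI (r := r + w.length)
      (h.mono (by simp [add_assoc])) (by omega) hv ha
    obtain ⟨e, S'', h4, h5, h6⟩ := ih h3 h2
    exact ⟨e, S'', h1.trans h4, h5, h6⟩

lemma PInv.far [Nonempty W] (hH : H.IsAcyclic) (hI : ∀ x, (H.neighborSet x).Infinite)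
    {r : ℕ} {S : Set (V × W)} (h : PInv G H r S) (hr : 1 ≤ r) {c : V}
    (hc : ∀ p ∈ S, ∀ w : G.Walk p.1 c, r < w.length) :
    ∃ d, ∃ S', S ⊆ S' ∧ (c, d) ∈ S' ∧ PInv G H r S' := by
  obtain ⟨d, hd⟩ := pp_far hH hI (Set.image Prod.snd S) (h.fin.image _) r
  replace hd : ∀ p ∈ S, ∀ w : H.Walk p.2 d, r < w.length := fun p hp => hd _ ⟨p, hp, rfl⟩
  have hsub : S ⊆ insert (c, d) S := Set.subset_insert _ _
  have c1 : ∀ p ∈ S, p.1 ≠ c := by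
    rintro p hp rfl
    simpa using hc p hp Walk.nil
  have d1 : ∀ p ∈ S, p.2 ≠ d := by
    rintro p hp rfl
    simpa using hd p hp Walk.nil
  have c2 : ∀ p ∈ S, ¬ G.Adj p.1 c := by
    intro p hp e
    have := hc p hp (Walk.cons e Walk.nil)
    simp at this; omega
  have d2 : ∀ p ∈ S, ¬ H.Adj p.2 d := by
    intro p hp e
    have := hd p hp (Walk.cons e Walk.nil)
    simp at this; omega
  refine ⟨d, insert (c, d) S, hsub, by simp, h.fin.insert _, ?_, ?_, ?_, ?_⟩
  · rintro a (rfl | ha) b (rfl | hb)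
    · simp
    · simp [(c1 _ hb).symm, (d1 _ hb).symm]
    · simp [(c1 _ ha), (d1 _ ha)]
    · exact h.eq a ha b hb
  · rintro a (rfl | ha) b (rfl | hb)
    · simp
    · rw [G.adj_comm, H.adj_comm]; simp [c2 b hb, d2 b hb]
    · simp [c2 a ha, d2 a ha]
    · exact h.adj a ha b hb
  · rintro a (rfl | ha) b (rfl | hb) w hw
    · exact Relation.ReflTransGen.refl
    · have := hc b hb w.reverse
      simp at this hw; omega
    · have := hc a ha w
      omega
    · exact (h.left a ha b hb w (by omega)).mono hsub
  · rintro a (rfl | ha) b (rfl | hb) w hw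
    · exact Relation.ReflTransGen.refl
    · have := hd b hb w.reverse
      simp at this hw; omega
    · have := hd a ha w
      omega
    · exact (h.right a ha b hb w (by omega)).mono hsub

lemma PInv.forth [Nonempty W] (hG : G.IsAcyclic) (hH : H.IsAcyclic)
    (hI : ∀ x, (H.neighborSet x).Infinite)
    {k : ℕ} {S : Set (V × W)} (h : PInv G H (2 ^ (k + 1)) S) (c : V) :
    ∃ d, ∃ S', S ⊆ S' ∧ (c, d) ∈ S' ∧ PInv G H (2 ^ k) S' := by
  have h1 : 1 ≤ 2 ^ k := Nat.one_le_two_pow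
  by_cases hc : ∃ p ∈ S, ∃ w : G.Walk p.1 c, w.length ≤ 2 ^ k
  · obtain ⟨p, hp, w, hw⟩ := hc
    exact PInv.path hG hH hI h1 w (h.mono (by rw [pow_succ]; omega)) hp
  · push Not at hc
    exact (h.mono (by rw [pow_succ]; omega)).far hH hI h1 hc

lemma PInv.back [Nonempty V] (hG : G.IsAcyclic) (hH : H.IsAcyclic)
    (hI : ∀ x, (G.neighborSet x).Infinite)
    {k : ℕ} {S : Set (V × W)} (h : PInv G H (2 ^ (k + 1)) S) (d : W) :
    ∃ c, ∃ S', S ⊆ S' ∧ (c, d) ∈ S' ∧ PInv G H (2 ^ k) S' := by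
  obtain ⟨c, S', h1, h2, h3⟩ := h.swap.forth hH hG hI d
  exact ⟨c, Set.preimage Prod.swap S', fun x hx => h1 (by simpa using hx), h2, h3.swap⟩

end Comb

section Logic



lemma realize_listAnd {L : Language} {M : Type*} [L.Structure M] {α : Type*} {m : ℕ}
    (l : List (L.BoundedFormula α m)) (v : α → M) (xs : Fin m → M) :
    (BoundedFormula.listAnd l).Realize v xs ↔ ∀ φ ∈ l, φ.Realize v xs := by
  induction l with
  | nil => simp [BoundedFormula.listAnd]
  | cons a l ih =>
    simp only [BoundedFormula.listAnd, List.foldr_cons, BoundedFormula.realize_inf,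
      List.forall_mem_cons] at ih ⊢
    rw [ih]

lemma realize_exsN {L : Language} {M : Type*} [L.Structure M] {α : Type*} {m : ℕ} :
    ∀ {k : ℕ} (φ : L.BoundedFormula α (m + k)) (v : α → M) (xs : Fin m → M),
    (BoundedFormula.exsN φ).Realize v xs ↔ ∃ ys : Fin k → M, φ.Realize v (Fin.append xs ys)
  | 0, φ, v, xs => by
    have h : ∀ ys : Fin 0 → M, Fin.append xs ys = xs := by
      intro ys
      funext i
      exact Fin.append_left xs ys i
    simp [BoundedFormula.exsN, h]
  | k + 1, φ, v, xs => by
    rw [BoundedFormula.exsN, realize_exsN]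
    simp only [BoundedFormula.realize_ex]
    constructor
    · rintro ⟨ys, a, h⟩
      refine ⟨Fin.snoc ys a, ?_⟩
      rw [Fin.append_snoc]; exact h
    · rintro ⟨ys, h⟩
      refine ⟨Fin.init ys, ys (Fin.last k), ?_⟩
      rw [← Fin.append_snoc, Fin.snoc_init_self]; exact h

variable {M : Type} [Language.graph.Structure M]

lemma realize_atLeast (n : ℕ) : M ⊨ FreePseudoplane.atLeastNeighbors n ↔
    ∀ x : M, ∃ y : Fin n → M, (∀ i, Structure.RelMap adj ![x, y i]) ∧ Function.Injective y := by
  rw [Sentence.Realize, Formula.Realize, FreePseudoplane.atLeastNeighbors,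
    BoundedFormula.realize_all]
  refine forall_congr' fun x => ?_
  rw [realize_exsN]
  refine exists_congr fun y => ?_
  rw [realize_listAnd]
  have hx : Fin.append (Fin.snoc default x : Fin 1 → M) y ⟨0, by omega⟩ = x := by
    have := Fin.append_left (Fin.snoc default x : Fin 1 → M) y 0
    exact this
  have hy : ∀ i : Fin n, Fin.append (Fin.snoc default x : Fin 1 → M) y ⟨1 + (i : ℕ), by omega⟩ = y i :=
    fun i => Fin.append_right (Fin.snoc default x : Fin 1 → M) y i
  simp only [List.forall_mem_append, List.forall_mem_map, List.mem_flatMap, List.mem_finRange,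
    true_and, true_implies, List.mem_map, forall_exists_index, forall_apply_eq_imp_iff]
  refine and_congr ?_ ?_
  · refine forall_congr' fun i => ?_
    rw [BoundedFormula.realize_rel₂]
    simp only [FreePseudoplane.xVar, FreePseudoplane.yVar, Term.realize_var, Sum.elim_inr]
    rw [hx, hy]
  · constructor
    · intro h i j hij
      by_contra hne
      have := h _ i j rfl
      rw [if_neg hne, BoundedFormula.realize_not, BoundedFormula.realize_bdEqual] at this
      simp only [FreePseudoplane.yVar, Term.realize_var, Sum.elim_inr] at this
      rw [hy, hy] at this
      exact this hij
    · rintro h _ i j rfl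
      split_ifs with hij
      · simp
      · rw [BoundedFormula.realize_not, BoundedFormula.realize_bdEqual]
        simp only [FreePseudoplane.yVar, Term.realize_var, Sum.elim_inr]
        rw [hy, hy]
        exact fun e => hij (h e)

lemma realize_noLoop (n : ℕ) : M ⊨ FreePseudoplane.noLoop n ↔
    ¬ ∃ a : Fin (n + 1) → M, (∀ i : Fin n, Structure.RelMap adj ![a i.castSucc, a i.succ]) ∧
      (∀ i j : Fin n, a i.castSucc = a j.castSucc → i = j) ∧ a (Fin.last n) = a 0 := by
  rw [FreePseudoplane.noLoop, Sentence.realize_not, Sentence.Realize, BoundedFormula.realize_exs]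
  refine not_congr (exists_congr fun a => ?_)
  rw [realize_listAnd]
  simp only [List.forall_mem_append, List.forall_mem_map, List.mem_flatMap, List.mem_finRange,
    true_and, true_implies, List.mem_map, forall_exists_index, forall_apply_eq_imp_iff,
    List.forall_mem_singleton, and_assoc]
  refine and_congr ?_ (and_congr ?_ ?_)
  · refine forall_congr' fun i => ?_
    rw [BoundedFormula.realize_rel₂]
    simp only [Term.realize_var, Sum.elim_inr]
  · constructor
    · intro h i j hij
      by_contra hne
      have := h _ i j rfl
      rw [if_neg hne, BoundedFormula.realize_not, BoundedFormula.realize_bdEqual] at this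
      exact this hij
    · rintro h _ i j rfl
      split_ifs with hij
      · simp
      · rw [BoundedFormula.realize_not, BoundedFormula.realize_bdEqual]
        exact fun e => hij (h i j e)
  · rw [BoundedFormula.realize_bdEqual]
    simp only [Term.realize_var, Sum.elim_inr]

instance [h : M ⊨ FreePseudoplane.theory] : M ⊨ Theory.simpleGraph :=
  Theory.Model.mono h (fun _ hx => Or.inl (Or.inl hx))

lemma acyclic_of_model [h : M ⊨ FreePseudoplane.theory] : (simpleGraphOfStructure M).IsAcyclic := by
  intro v c hc
  have h1 : M ⊨ FreePseudoplane.noLoop c.length :=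
    Theory.realize_sentence_of_mem FreePseudoplane.theory (Or.inr ⟨_, hc.three_le_length, rfl⟩)
  rw [realize_noLoop] at h1
  refine h1 ⟨fun i => c.getVert i, ?_, ?_, ?_⟩
  · intro i
    exact c.adj_getVert_succ i.2
  · intro i j hij
    exact Fin.ext (hc.getVert_injOn' (by simp; omega) (by simp; omega) hij)
  · simp

lemma infinite_of_model [h : M ⊨ FreePseudoplane.theory] (x : M) :
    ((simpleGraphOfStructure M).neighborSet x).Infinite := by
  intro hf
  have h1 : M ⊨ FreePseudoplane.atLeastNeighbors (hf.toFinset.card + 1) :=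
    Theory.realize_sentence_of_mem FreePseudoplane.theory (Or.inl (Or.inr ⟨_, rfl⟩))
  rw [realize_atLeast] at h1
  obtain ⟨y, hy, hinj⟩ := h1 x
  have h2 : (Finset.univ.map ⟨y, hinj⟩) ⊆ hf.toFinset := by
    intro z hz
    simp only [Finset.mem_map, Finset.mem_univ, true_and, Function.Embedding.coeFn_mk] at hz
    obtain ⟨i, rfl⟩ := hz
    simpa using hy i
  have := Finset.card_le_card h2
  simp at this

lemma relMap_congr {N : Type} [Language.graph.Structure N] {n : ℕ} (R : Language.graph.Relations n)
    (x : Fin n → M) (y : Fin n → N)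
    (h : ∀ i j, Structure.RelMap adj ![x i, x j] ↔ Structure.RelMap adj ![y i, y j]) :
    Structure.RelMap R x ↔ Structure.RelMap R y := by
  cases R
  have hx : x = ![x 0, x 1] := by funext i; fin_cases i <;> rfl
  have hy : y = ![y 0, y 1] := by funext i; fin_cases i <;> rfl
  rw [hx, hy]
  exact h 0 1

lemma term_var {α : Type} (t : Language.graph.Term α) : ∃ a, t = Term.var a := by
  cases t with
  | var a => exact ⟨a, rfl⟩
  | func f _ => exact isEmptyElim f

lemma ef {n : ℕ} (φ : Language.graph.BoundedFormula Empty n) : ∃ k : ℕ,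
    ∀ (M N : Type) [Language.graph.Structure M] [Language.graph.Structure N]
      [M ⊨ FreePseudoplane.theory] [N ⊨ FreePseudoplane.theory] [Nonempty M] [Nonempty N]
      (S : Set (M × N)) (k' : ℕ), k ≤ k' →
      PInv (simpleGraphOfStructure M) (simpleGraphOfStructure N) (2 ^ k') S →
      ∀ (e : Empty → M) (e' : Empty → N) (v : Fin n → M) (w : Fin n → N),
      (∀ i, (v i, w i) ∈ S) → (φ.Realize e v ↔ φ.Realize e' w) := by
  induction φ with
  | falsum => exact ⟨0, fun _ _ => by intros; rfl⟩
  | equal t₁ t₂ =>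
    refine ⟨0, fun M N => ?_⟩
    intro _ _ _ _ _ _ S k' _ hS e e' v w hvw
    obtain ⟨a | a, rfl⟩ := term_var t₁
    · exact a.elim
    obtain ⟨b | b, rfl⟩ := term_var t₂
    · exact b.elim
    exact hS.eq _ (hvw a) _ (hvw b)
  | rel R ts =>
    refine ⟨0, fun M N => ?_⟩
    intro _ _ _ _ _ _ S k' _ hS e e' v w hvw
    refine relMap_congr R _ _ fun i j => ?_
    obtain ⟨a | a, ha⟩ := term_var (ts i)
    · exact a.elim
    obtain ⟨b | b, hb⟩ := term_var (ts j)
    · exact b.elim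
    rw [ha, hb]
    exact hS.adj _ (hvw a) _ (hvw b)
  | imp f g hf hg =>
    obtain ⟨k₁, h₁⟩ := hf
    obtain ⟨k₂, h₂⟩ := hg
    refine ⟨max k₁ k₂, fun M N => ?_⟩
    intro _ _ _ _ _ _ S k' hk hS e e' v w hvw
    rw [BoundedFormula.realize_imp, BoundedFormula.realize_imp,
      h₁ M N S k' (by omega) hS e e' v w hvw, h₂ M N S k' (by omega) hS e e' v w hvw]
  | all f hf =>
    obtain ⟨k, h⟩ := hf
    refine ⟨k + 1, fun M N => ?_⟩
    intro _ _ _ _ _ _ S k' hk hS e e' v w hvw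
    obtain ⟨k', rfl⟩ : ∃ l, k' = l + 1 := ⟨k' - 1, by omega⟩
    have key : ∀ (S' : Set (M × N)) c d, S ⊆ S' → (c, d) ∈ S' →
        ∀ i, ((Fin.snoc v c : Fin _ → M) i, (Fin.snoc w d : Fin _ → N) i) ∈ S' := by
      intro S' c d h1 h2 i
      induction i using Fin.lastCases with
      | last => simpa using h2
      | cast i => simpa using h1 (hvw i)
    rw [BoundedFormula.realize_all, BoundedFormula.realize_all]
    constructor
    · intro hM d
      obtain ⟨c, S', h1, h2, h3⟩ := hS.back acyclic_of_model acyclic_of_model infinite_of_model d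
      exact (h M N S' k' (by omega) h3 e e' _ _ (key S' c d h1 h2)).1 (hM c)
    · intro hN c
      obtain ⟨d, S', h1, h2, h3⟩ := hS.forth acyclic_of_model acyclic_of_model infinite_of_model c
      exact (h M N S' k' (by omega) h3 e e' _ _ (key S' c d h1 h2)).2 (hN d)

lemma equiv_models (M N : Type) [Language.graph.Structure M] [Language.graph.Structure N]
    [M ⊨ FreePseudoplane.theory] [N ⊨ FreePseudoplane.theory] [Nonempty M] [Nonempty N]
    (φ : Language.graph.Sentence) : M ⊨ φ ↔ N ⊨ φ := by
  obtain ⟨k, h⟩ := ef φ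
  refine h M N ∅ k le_rfl ⟨Set.finite_empty, ?_, ?_, ?_, ?_⟩ _ _ _ _ (fun i => i.elim0) <;> simp

/-- The concrete tree on lists of naturals. -/
def treeG : SimpleGraph (List ℕ) where
  Adj a b := (∃ n, a = n :: b) ∨ (∃ n, b = n :: a)
  symm := ⟨fun _ _ h => h.symm⟩
  loopless := ⟨by
    rintro a (⟨n, h⟩ | ⟨n, h⟩) <;> simpa using congrArg List.length h⟩

lemma tree_max {a b : List ℕ} (h : treeG.Adj a b) (hl : b.length ≤ a.length) : b = a.tail := by
  rcases h with ⟨n, rfl⟩ | ⟨n, rfl⟩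
  · rfl
  · simp at hl

lemma tree_noLoop {n : ℕ} (hn : 3 ≤ n) (a : Fin (n + 1) → List ℕ)
    (h1 : ∀ i : Fin n, treeG.Adj (a i.castSucc) (a i.succ))
    (h2 : ∀ i j : Fin n, a i.castSucc = a j.castSucc → i = j) (h3 : a (Fin.last n) = a 0) :
    False := by
  have hlt : ∀ i, i % n < n := fun i => Nat.mod_lt _ (by omega)
  let b : ℕ → List ℕ := fun i => a (⟨i % n, hlt i⟩ : Fin n).castSucc
  have hb : ∀ i, treeG.Adj (b i) (b (i + 1)) := by
    intro i
    have := h1 ⟨i % n, hlt i⟩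
    have e : a (Fin.succ ⟨i % n, hlt i⟩) = b (i + 1) := by
      by_cases hi : i % n + 1 = n
      · have e1 : (Fin.succ ⟨i % n, hlt i⟩ : Fin (n + 1)) = Fin.last n := Fin.ext (by simpa using hi)
        have e2 : (i + 1) % n = 0 := by
          rw [Nat.add_mod, Nat.mod_eq_of_lt (by omega : 1 < n), hi, Nat.mod_self]
        rw [e1, h3]
        refine congrArg a (Fin.ext ?_)
        simp [e2]
      · have e2 : (i + 1) % n = i % n + 1 := by
          rw [Nat.add_mod, Nat.mod_eq_of_lt (by omega : 1 < n), Nat.mod_eq_of_lt]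
          have := hlt i
          omega
        refine congrArg a (Fin.ext ?_)
        simp [e2]
    rw [e] at this
    exact this
  haveI : Nonempty (Fin n) := ⟨⟨0, by omega⟩⟩
  obtain ⟨j, hj⟩ := Finite.exists_max (fun i : Fin n => (a i.castSucc).length)
  have hbj : b (j + n) = a j.castSucc := by
    refine congrArg a (Fin.ext ?_)
    simp [Nat.mod_eq_of_lt j.2]
  have hmax : ∀ i, (b i).length ≤ (b (j + n)).length := by
    intro i
    rw [hbj]
    exact hj ⟨i % n, hlt i⟩
  have ha := tree_max (hb (j + n)) (hmax _)
  have hc : treeG.Adj (b (j + n)) (b (j + n - 1)) := by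
    have := hb (j + n - 1)
    rw [show j.val + n - 1 + 1 = j + n by omega] at this
    exact this.symm
  have hd := tree_max hc (hmax _)
  have he := h2 _ _ (ha.trans hd.symm)
  have hf : (j + n + 1) % n = (j + n - 1) % n := congrArg Fin.val he
  have hg : j + n - 1 ≡ j + n + 1 [MOD n] := hf.symm
  have := (Nat.modEq_iff_dvd' (by omega)).1 hg
  have := Nat.le_of_dvd (by omega) this
  omega

lemma tree_model : @Theory.Model _ (List ℕ) treeG.structure FreePseudoplane.theory := by
  letI := treeG.structure
  refine ⟨?_⟩
  rintro φ ((h | ⟨n, rfl⟩) | ⟨n, hn, rfl⟩)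
  · exact (simpleGraph_model treeG).realize_of_mem φ h
  · rw [realize_atLeast]
    intro x
    refine ⟨fun i => i.val :: x, fun i => ?_, fun i j h => ?_⟩
    · exact Or.inr ⟨i.val, rfl⟩
    · exact Fin.ext (by simpa using h)
  · rw [realize_noLoop]
    rintro ⟨a, h1, h2, h3⟩
    exact tree_noLoop hn a h1 h2 h3

end Logic

end PPProof

/-- The theory of the free pseudoplane is complete: it is satisfiable, and every
sentence or its negation is a consequence. -/
theorem freePseudoplane_theory_isComplete : FreePseudoplane.theory.IsComplete := by
  letI := PPProof.treeG.structure
  haveI := PPProof.tree_model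
  refine ⟨⟨Theory.ModelType.of _ (List ℕ)⟩, fun φ => ?_⟩
  rw [Theory.models_sentence_iff, Theory.models_sentence_iff]
  by_cases h : (List ℕ) ⊨ φ
  · exact Or.inl fun M => (PPProof.equiv_models (List ℕ) M φ).1 h
  · refine Or.inr fun M => ?_
    exact (Sentence.realize_not M).2 fun hM => h ((PPProof.equiv_models (List ℕ) M φ).2 hM)
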